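/- Let i, j ∈ U with i ≠ j, and let Pr'_{PL+C} denote PL+C probabilities after replacing p_j by some p_j' with p_j < p_j' ≤ 1 (all other parameters unchanged). If, after the replacement, at least k+1 of the consideration probabilities equal 1, then Pr'_{PL+C}(R_{i=1}) ≤ Pr_{PL+C}(R_{i=1}), where R_{i=1} is the set of length-k rankings with item i in first position. -/

import Mathlib

open scoped Classical
open Finset

noncomputable section

/-- Weight of a consideration set `C`: each item in `C` is considered (prob `p i`),
each item outside is not considered (prob `1 - p j`). -/
def considerWeight (n : ℕ) (p : Fin n → ℝ) (C : Finset (Fin n)) : ℝ :=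
  (∏ i ∈ C, p i) * ∏ j ∈ Cᶜ, (1 - p j)

/-- Normalizing constant `z_{k,p}`: total weight of consideration sets of size at least `k`. -/
def zConst (n k : ℕ) (p : Fin n → ℝ) : ℝ :=
  ∑ C ∈ Finset.univ.filter (fun C : Finset (Fin n) => k ≤ C.card), considerWeight n p C

/-- Probability of consideration set `C` (conditioned on `|C| ≥ k`). -/
def prC (n k : ℕ) (p : Fin n → ℝ) (C : Finset (Fin n)) : ℝ :=
  if k ≤ C.card then considerWeight n p C / zConst n k p else 0

/-- Plackett–Luce probability of the length-`k` ranking `r` given consideration set `C`. -/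
def prPL (n k : ℕ) (u : Fin n → ℝ) (r : Fin k ↪ Fin n) (C : Finset (Fin n)) : ℝ :=
  if ∀ t : Fin k, r t ∈ C then
    ∏ t : Fin k, Real.exp (u (r t)) /
      ∑ j ∈ C \ (Finset.Iio t).image r, Real.exp (u j)
  else 0

/-- Plackett–Luce-with-consideration (PL+C) probability of the ranking `r`. -/
def prPLC (n k : ℕ) (u p : Fin n → ℝ) (r : Fin k ↪ Fin n) : ℝ :=
  ∑ C : Finset (Fin n), prC n k p C * prPL n k u r C

/-- PL probability of a set of rankings. -/
def prPLset (n k : ℕ) (u : Fin n → ℝ) (R : Finset (Fin k ↪ Fin n)) (C : Finset (Fin n)) : ℝ :=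
  ∑ r ∈ R, prPL n k u r C

/-- PL+C probability of a set of rankings. -/
def prPLCset (n k : ℕ) (u p : Fin n → ℝ) (R : Finset (Fin k ↪ Fin n)) : ℝ :=
  ∑ r ∈ R, prPLC n k u p r

/-- `R_{i≤ℓ}`: the set of length-`k` rankings with item `i` among the top `ℓ` positions. -/
def topSet (n k : ℕ) (i : Fin n) (ℓ : ℕ) : Finset (Fin k ↪ Fin n) :=
  Finset.univ.filter (fun r => ∃ t : Fin k, (t : ℕ) < ℓ ∧ r t = i)

/-!
When `k` of the items other than `j` are considered with certainty, the conditioning on `k ≤ |C|`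
is void, and the probability that `i` comes first is the expectation of the multinomial logit
choice probability of `i` over a consideration set `C` which contains each item independently.
Drawing `C` on the items other than `j` first and deciding on `j` afterwards, this expectation is
affine in `p j`, with slope the mean effect of adding `j` to `C`. That effect is nonpositive, since
a further competitor only enlarges the denominator of the choice probability.
-/

section Update

variable {ι : Type*} [DecidableEq ι]

lemma one_sub_update {R : Type*} [AddGroupWithOne R] (f : ι → R) (i : ι) (x : R) (a : ι) :
    1 - Function.update f i x a = Function.update (fun b ↦ 1 - f b) i (1 - x) a :=
  Function.apply_update (fun _ y ↦ 1 - y) f i x a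

variable [Fintype ι]

lemma card_filter_ne_and_le_card_filter_update {α : Type*} [DecidableEq α] (f : ι → α) (y : α)
    (i : ι) (x : α) : #{a | a ≠ i ∧ f a = y} ≤ #{a | Function.update f i x a = y} :=
  card_le_card <| monotone_filter_right _ fun a _ ha ↦ by simpa [ha.1] using ha.2

lemma card_filter_update_le {α : Type*} [DecidableEq α] (f : ι → α) (y : α) (i : ι) (x : α) :
    #{a | Function.update f i x a = y} ≤ #{a | a ≠ i ∧ f a = y} + 1 := by
  refine (card_le_card fun a ha ↦ ?_).trans (card_insert_le i _)
  by_cases hai : a = i <;> simp_all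

lemma sum_eq_sum_powerset_erase {M : Type*} [AddCommMonoid M] (a : ι) (f : Finset ι → M) :
    ∑ C, f C = ∑ C ∈ (univ.erase a).powerset, (f C + f (insert a C)) := by
  rw [sum_add_distrib, ← sum_powerset_insert (notMem_erase a univ), insert_erase (mem_univ a),
    powerset_univ]

end Update

section Logit

variable {ι : Type*}

lemma sum_exp_pos (u : ι → ℝ) {C : Finset ι} (hC : C.Nonempty) : 0 < ∑ b ∈ C, Real.exp (u b) :=
  sum_pos (fun _ _ ↦ Real.exp_pos _) hC

variable [DecidableEq ι]

/-- The multinomial logit (Luce) probability that `a` is chosen from `C`, which is the law of the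
first entry of a Plackett–Luce ranking. It is `0` for `a ∉ C`. -/
def logitProb (u : ι → ℝ) (C : Finset ι) (a : ι) : ℝ :=
  if a ∈ C then Real.exp (u a) / ∑ b ∈ C, Real.exp (u b) else 0

lemma logitProb_of_mem (u : ι → ℝ) {C : Finset ι} {a : ι} (ha : a ∈ C) :
    logitProb u C a = Real.exp (u a) / ∑ b ∈ C, Real.exp (u b) :=
  if_pos ha

lemma logitProb_of_notMem (u : ι → ℝ) {C : Finset ι} {a : ι} (ha : a ∉ C) :
    logitProb u C a = 0 :=
  if_neg ha

lemma sum_logitProb (u : ι → ℝ) {C : Finset ι} (hC : C.Nonempty) :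
    ∑ a ∈ C, logitProb u C a = 1 := by
  rw [sum_congr rfl fun a ha ↦ logitProb_of_mem u ha, ← sum_div, div_self (sum_exp_pos u hC).ne']

lemma logitProb_anti (u : ι → ℝ) {C D : Finset ι} (hCD : C ⊆ D) {a : ι} (ha : a ∈ C) :
    logitProb u D a ≤ logitProb u C a := by
  rw [logitProb_of_mem u ha, logitProb_of_mem u (hCD ha)]
  exact div_le_div_of_nonneg_left (Real.exp_pos _).le (sum_exp_pos u ⟨a, ha⟩)
    (sum_le_sum_of_subset_of_nonneg hCD fun _ _ _ ↦ (Real.exp_pos _).le)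

lemma logitProb_insert_le (u : ι → ℝ) (C : Finset ι) {a b : ι} (hab : a ≠ b) :
    logitProb u (insert b C) a ≤ logitProb u C a := by
  by_cases ha : a ∈ C
  · exact logitProb_anti u (subset_insert b C) ha
  · rw [logitProb_of_notMem u ha, logitProb_of_notMem u (by simp [hab, ha])]

end Logit

section RankingTail

variable {ι : Type*} [DecidableEq ι] {k : ℕ} (C : Finset ι) (r : Fin (k + 1) ↪ ι)

lemma sdiff_image_Iio_succ (t : Fin k) :
    C \ (Iio t.succ).image r = C.erase (r 0) \ (Iio t).image (Fin.Embedding.tail r) := by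
  ext x
  simp only [mem_sdiff, mem_erase, mem_image, mem_Iio, Fin.exists_fin_succ, Fin.succ_pos,
    Fin.succ_lt_succ_iff, Fin.Embedding.coe_tail, Fin.tail, true_and, not_or, ne_comm (a := x)]
  tauto

lemma forall_mem_iff_tail_mem_erase :
    (∀ t, r t ∈ C) ↔ r 0 ∈ C ∧ ∀ t, Fin.Embedding.tail r t ∈ C.erase (r 0) := by
  simp [Fin.forall_fin_succ, Fin.tail]

end RankingTail

section PlackettLuce

variable {n k : ℕ} (u : Fin n → ℝ) (C : Finset (Fin n))

lemma prPL_succ (r : Fin (k + 1) ↪ Fin n) :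
    prPL n (k + 1) u r C =
      logitProb u C (r 0) * prPL n k u (Fin.Embedding.tail r) (C.erase (r 0)) := by
  have hIio : Iio (0 : Fin (k + 1)) = ∅ := Iio_bot
  simp only [prPL, logitProb, forall_mem_iff_tail_mem_erase, Fin.prod_univ_succ,
    sdiff_image_Iio_succ, hIio, image_empty, sdiff_empty, ite_and, ite_mul, mul_ite, zero_mul,
    mul_zero]
  split_ifs <;> rfl

lemma prPL_eq_zero_of_notMem {C : Finset (Fin n)} {r : Fin k ↪ Fin n} {t : Fin k} (ht : r t ∉ C) :
    prPL n k u r C = 0 :=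
  if_neg fun h ↦ ht (h t)

lemma mem_topSet_one {r : Fin (k + 1) ↪ Fin n} {i : Fin n} :
    r ∈ topSet n (k + 1) i 1 ↔ r 0 = i := by
  simp [topSet]

lemma prPLset_topSet_one (i : Fin n) :
    prPLset n (k + 1) u (topSet n (k + 1) i 1) C =
      logitProb u C i * prPLset n k u univ (C.erase i) := by
  rw [prPLset, prPLset, mul_sum]
  refine sum_of_injOn Fin.Embedding.tail ?_ (fun _ _ ↦ mem_univ _) ?_ ?_
  · intro r hr s hs hrs
    rw [mem_coe, mem_topSet_one] at hr hs
    ext t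
    cases t using Fin.cases with
    | zero => rw [hr, hs]
    | succ t => exact congrArg Fin.val (DFunLike.congr_fun hrs t)
  · intro r _ hr
    have hi : i ∈ Set.range r := by
      by_contra hi
      exact hr ⟨Fin.Embedding.cons r hi, mem_topSet_one.2 rfl, Fin.Embedding.tail_cons r hi⟩
    obtain ⟨t, rfl⟩ := hi
    rw [prPL_eq_zero_of_notMem u (notMem_erase (r t) C), mul_zero]
  · intro r hr
    rw [prPL_succ, mem_topSet_one.1 hr]

lemma sum_prPLset_topSet_one :
    ∑ i, prPLset n (k + 1) u (topSet n (k + 1) i 1) C = prPLset n (k + 1) u univ C := by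
  have htop (i : Fin n) : topSet n (k + 1) i 1 = univ.filter fun r ↦ r 0 = i := by
    ext r
    simp [mem_topSet_one]
  simp only [prPLset, htop, sum_fiberwise]

lemma prPLset_univ_succ :
    prPLset n (k + 1) u univ C = ∑ i ∈ C, logitProb u C i * prPLset n k u univ (C.erase i) := by
  simp only [← sum_prPLset_topSet_one, prPLset_topSet_one]
  refine (sum_subset (subset_univ C) fun i _ hi ↦ ?_).symm
  rw [logitProb_of_notMem u hi, zero_mul]

lemma prPLset_univ_eq_one {C : Finset (Fin n)} (hC : k ≤ #C) : prPLset n k u univ C = 1 := by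
  induction k generalizing C with
  | zero => simp [prPLset, prPL]
  | succ k ih =>
    have hrest (i : Fin n) (hi : i ∈ C) : prPLset n k u univ (C.erase i) = 1 :=
      ih (by rw [card_erase_of_mem hi]; lia)
    rw [prPLset_univ_succ, ← sum_logitProb u (card_pos.1 (Nat.zero_lt_of_lt hC))]
    exact sum_congr rfl fun i hi ↦ by rw [hrest i hi, mul_one]

lemma prPLset_topSet_one_eq_logitProb {C : Finset (Fin n)} (hC : k + 1 ≤ #C) (i : Fin n) :
    prPLset n (k + 1) u (topSet n (k + 1) i 1) C = logitProb u C i := by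
  by_cases hi : i ∈ C
  · rw [prPLset_topSet_one, prPLset_univ_eq_one u (by rw [card_erase_of_mem hi]; lia), mul_one]
  · rw [prPLset_topSet_one, logitProb_of_notMem u hi, zero_mul]

end PlackettLuce

section Consideration

variable {n k : ℕ} {p : Fin n → ℝ}

lemma sum_considerWeight (p : Fin n → ℝ) : ∑ C, considerWeight n p C = 1 := by
  simpa [considerWeight, compl_eq_univ_sdiff] using (prod_add p (fun a ↦ 1 - p a) univ).symm

lemma considerWeight_nonneg (hp : ∀ a, p a ∈ Set.Icc 0 1) (C : Finset (Fin n)) :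
    0 ≤ considerWeight n p C :=
  mul_nonneg (prod_nonneg fun a _ ↦ (hp a).1) (prod_nonneg fun a _ ↦ sub_nonneg.2 (hp a).2)

lemma considerWeight_eq_zero_of_card_lt {C : Finset (Fin n)} (hC : #C < #{a | p a = 1}) :
    considerWeight n p C = 0 := by
  obtain ⟨a, ha, haC⟩ := exists_mem_notMem_of_card_lt_card hC
  have hpa : 1 - p a = 0 := sub_eq_zero.2 (mem_filter_univ a |>.1 ha).symm
  rw [considerWeight, prod_eq_zero (mem_compl.2 haC) hpa, mul_zero]

lemma zConst_eq_one (hk : k ≤ #{a | p a = 1}) : zConst n k p = 1 := by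
  rw [zConst, ← sum_considerWeight p]
  refine sum_subset (filter_subset _ _) fun C _ hC ↦ considerWeight_eq_zero_of_card_lt ?_
  exact (not_le.1 fun h ↦ hC (by simpa using h)).trans_le hk

lemma prC_eq_considerWeight (hk : k ≤ #{a | p a = 1}) (C : Finset (Fin n)) :
    prC n k p C = considerWeight n p C := by
  rw [prC, zConst_eq_one hk, div_one, ite_eq_left_iff, not_le]
  exact fun hC ↦ (considerWeight_eq_zero_of_card_lt (hC.trans_le hk)).symm

variable {j : Fin n}

lemma considerWeight_update_of_notMem (q : ℝ) {C : Finset (Fin n)} (hj : j ∉ C) :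
    considerWeight n (Function.update p j q) C =
      (1 - q) * considerWeight n (Function.update p j 0) C := by
  simp only [considerWeight, one_sub_update, prod_update_of_notMem hj,
    prod_update_of_mem (mem_compl.2 hj)]
  ring

lemma considerWeight_update_insert (q : ℝ) {C : Finset (Fin n)} (hj : j ∉ C) :
    considerWeight n (Function.update p j q) (insert j C) =
      q * considerWeight n (Function.update p j 0) C := by
  simp only [considerWeight, one_sub_update, prod_insert hj, Function.update_self,
    prod_update_of_notMem hj, prod_update_of_mem (mem_compl.2 hj), compl_insert,
    prod_update_of_notMem (notMem_erase j Cᶜ), sdiff_singleton_eq_erase]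
  ring

-- With `p j` replaced by `0`, the set `C` on the right is a draw from the items other than `j`.
lemma sum_considerWeight_update_mul (p : Fin n → ℝ) (j : Fin n) (q : ℝ)
    (g : Finset (Fin n) → ℝ) :
    ∑ C, considerWeight n (Function.update p j q) C * g C =
      ∑ C, considerWeight n (Function.update p j 0) C * ((1 - q) * g C + q * g (insert j C)) := by
  rw [sum_eq_sum_powerset_erase j, sum_eq_sum_powerset_erase j]
  refine sum_congr rfl fun C hC ↦ ?_
  have hj : j ∉ C := fun h ↦ notMem_erase j univ (mem_powerset.1 hC h)
  rw [considerWeight_update_of_notMem q hj, considerWeight_update_insert q hj,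
    considerWeight_update_insert 0 hj]
  ring

lemma antitone_sum_considerWeight_update_mul (hp : ∀ a ≠ j, p a ∈ Set.Icc 0 1)
    {g : Finset (Fin n) → ℝ} (hg : ∀ C, g (insert j C) ≤ g C) :
    Antitone fun q ↦ ∑ C, considerWeight n (Function.update p j q) C * g C := by
  have hp₀ : ∀ a, Function.update p j 0 a ∈ Set.Icc (0 : ℝ) 1 :=
    (Function.forall_update_iff p fun _ x ↦ x ∈ Set.Icc (0 : ℝ) 1).2 ⟨by simp, hp⟩
  intro q q' hqq'
  simp only [sum_considerWeight_update_mul p j q, sum_considerWeight_update_mul p j q']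
  refine sum_le_sum fun C _ ↦ mul_le_mul_of_nonneg_left ?_ (considerWeight_nonneg hp₀ C)
  linarith [mul_le_mul_of_nonneg_left (hg C) (sub_nonneg.2 hqq')]

end Consideration

section FirstPosition

variable {n k : ℕ}

lemma prPLCset_eq_sum_prC_mul_prPLset (u p : Fin n → ℝ) (R : Finset (Fin k ↪ Fin n)) :
    prPLCset n k u p R = ∑ C, prC n k p C * prPLset n k u R C := by
  simp only [prPLCset, prPLC, prPLset, mul_sum]
  exact sum_comm

lemma prPLCset_topSet_one {p : Fin n → ℝ} (hk : k + 1 ≤ #{a | p a = 1}) (u : Fin n → ℝ)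
    (i : Fin n) :
    prPLCset n (k + 1) u p (topSet n (k + 1) i 1) =
      ∑ C, considerWeight n p C * logitProb u C i := by
  rw [prPLCset_eq_sum_prC_mul_prPLset]
  refine sum_congr rfl fun C _ ↦ ?_
  rw [prC_eq_considerWeight hk]
  rcases lt_or_ge #C (k + 1) with hC | hC
  · rw [considerWeight_eq_zero_of_card_lt (hC.trans_le hk), zero_mul, zero_mul]
  · rw [prPLset_topSet_one_eq_logitProb u hC]

theorem increase_pj_no_error_general (n k : ℕ) (u p : Fin n → ℝ) (i j : Fin n)
    (hp : ∀ a ≠ j, p a ∈ Set.Icc 0 1) (hij : i ≠ j) (hones : k ≤ #{a | a ≠ j ∧ p a = 1}) :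
    Antitone fun q ↦ prPLCset n k u (Function.update p j q) (topSet n k i 1) := by
  cases k with
  | zero => simp [prPLCset, topSet, antitone_const]
  | succ k =>
    have hk (q : ℝ) : k + 1 ≤ #{a | Function.update p j q a = 1} :=
      hones.trans (card_filter_ne_and_le_card_filter_update p 1 j q)
    simp only [prPLCset_topSet_one (hk _)]
    exact antitone_sum_considerWeight_update_mul hp fun C ↦ logitProb_insert_le u C hij

end FirstPosition

/-- if after increasing `p j` at least `k+1` consideration probabilities
equal 1, then increasing `p j` cannot increase the probability that `i` is ranked first. -/
theorem increase_pj_no_error (n k : ℕ) (u p : Fin n → ℝ) (i j : Fin n) (pj' : ℝ)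
    (hp : ∀ a, 0 < p a ∧ p a ≤ 1)
    (hij : i ≠ j) (hlt : p j < pj') (hle : pj' ≤ 1)
    (hones : k + 1 ≤
      (Finset.univ.filter (fun a : Fin n => Function.update p j pj' a = 1)).card) :
    prPLCset n k u (Function.update p j pj') (topSet n k i 1) ≤
      prPLCset n k u p (topSet n k i 1) := by
  have hanti := increase_pj_no_error_general n k u p i j (fun a _ ↦ ⟨(hp a).1.le, (hp a).2⟩) hij
    (Nat.le_of_add_le_add_right (hones.trans (card_filter_update_le p 1 j pj')))
  simpa only [Function.update_eq_self] using hanti hlt.le
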